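/- arXiv:1006.2781 — 3 statements merged into one kernel-verified Lean document; each statement's English description precedes it below -/
import Mathlib

section
/- Let R be a commutative ring, C a commutative associative unital R-algebra, and Δ : C → C ⊗[R] C an R-linear map which is a map of C-bimodules, i.e. Δ(a·c) = (L_a ⊗ id)(Δ(c)) and Δ(a·c) = (id ⊗ L_c)(Δ(a)) for all a, c ∈ C, where L_x denotes multiplication by x. Let H be an associative unital R-algebra and τ : C → H an R-linear map. Define the R-linear map D : C ⊗[R] H → C ⊗[R] H as the composite D = (id_C ⊗ β) ∘ (Δ ⊗ id_H), where β : C ⊗ H → H is the linear map β(c' ⊗ h) = τ(c')·h − h·τ(c'); thus D(c ⊗ h) = Σᵢ c₍₁ᵢ₎ ⊗ (τ(c₍₂ᵢ₎)·h − h·τ(c₍₂ᵢ₎)) where Δ(c) = Σᵢ c₍₁ᵢ₎ ⊗ c₍₂ᵢ₎. Then D is a derivation of the tensor product algebra C ⊗[R] H: D(x·y) = D(x)·y + x·D(y) for all x, y ∈ C ⊗ H. -/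
/-!
Write `e = (id ⊗ τ)(Δ 1)`. Left linearity gives `Δ c = c • Δ 1`, so that `D (c ⊗ h)` is the
commutator of `c • e` with `1 ⊗ h`. As `C` acts on `C ⊗ H` through central elements, the scalar `c`
moves to the other argument, giving `D (c ⊗ h) = e * (c ⊗ h) - (c ⊗ h) * e`: the twisted term is
the inner derivation defined by `e`.
-/

open TensorProduct

/-- The linear map `β : C ⊗ H → H`, `c' ⊗ h ↦ τ(c')·h − h·τ(c')`. -/
noncomputable def bracketBeta (R : Type*) {C H : Type*} [CommRing R] [CommRing C] [Algebra R C]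
    [Ring H] [Algebra R H] (τ : C →ₗ[R] H) : C ⊗[R] H →ₗ[R] H :=
  LinearMap.mul' R H ∘ₗ TensorProduct.map τ (LinearMap.id : H →ₗ[R] H)
    - LinearMap.mul' R H ∘ₗ TensorProduct.map (LinearMap.id : H →ₗ[R] H) τ
        ∘ₗ (TensorProduct.comm R C H).toLinearMap

/-- The twisted term `D = (id_C ⊗ β) ∘ (Δ ⊗ id_H) : C ⊗ H → C ⊗ H`, so that
`D (c ⊗ h) = Σᵢ c₍₁ᵢ₎ ⊗ (τ(c₍₂ᵢ₎)·h − h·τ(c₍₂ᵢ₎))`. -/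
noncomputable def twistedTermD (R : Type*) {C H : Type*} [CommRing R] [CommRing C] [Algebra R C]
    [Ring H] [Algebra R H] (Δ : C →ₗ[R] C ⊗[R] C) (τ : C →ₗ[R] H) :
    C ⊗[R] H →ₗ[R] C ⊗[R] H :=
  TensorProduct.map (LinearMap.id : C →ₗ[R] C) (bracketBeta R τ)
    ∘ₗ (TensorProduct.assoc R C C H).toLinearMap
    ∘ₗ TensorProduct.map Δ (LinearMap.id : H →ₗ[R] H)

section TwistedTerm

variable {R C H : Type*} [CommRing R] [CommRing C] [Algebra R C] [Ring H] [Algebra R H]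

theorem bracketBeta_tmul (τ : C →ₗ[R] H) (c : C) (h : H) :
    bracketBeta R τ (c ⊗ₜ[R] h) = τ c * h - h * τ c := by
  simp [bracketBeta]

theorem lTensor_bracketBeta_assoc_tmul {A : Type*} [Ring A] [Algebra R A] (τ : C →ₗ[R] H)
    (t : A ⊗[R] C) (h : H) :
    (bracketBeta R τ).lTensor A (TensorProduct.assoc R A C H (t ⊗ₜ[R] h))
      = τ.lTensor A t * (1 ⊗ₜ[R] h) - (1 ⊗ₜ[R] h) * τ.lTensor A t := by
  induction t with
  | zero => simp
  | tmul a c => simp [bracketBeta_tmul, TensorProduct.tmul_sub]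
  | add s t hs ht =>
    simp only [TensorProduct.add_tmul, map_add, hs, ht, add_mul, mul_add]
    abel

theorem twistedTermD_tmul (Δ : C →ₗ[R] C ⊗[R] C) (τ : C →ₗ[R] H) (c : C) (h : H) :
    twistedTermD R Δ τ (c ⊗ₜ[R] h)
      = τ.baseChange C (Δ c) * (1 ⊗ₜ[R] h) - (1 ⊗ₜ[R] h) * τ.baseChange C (Δ c) :=
  lTensor_bracketBeta_assoc_tmul τ (Δ c) h

theorem twistedTermD_eq_mulLeft_sub_mulRight (Δ : C →ₗ[R] C ⊗[R] C)
    (hΔ : ∀ c : C, Δ c = c • Δ 1) (τ : C →ₗ[R] H) :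
    twistedTermD R Δ τ
      = LinearMap.mulLeft R (τ.baseChange C (Δ 1))
        - LinearMap.mulRight R (τ.baseChange C (Δ 1)) := by
  refine TensorProduct.ext' fun c h => ?_
  set e := τ.baseChange C (Δ 1)
  have smul_one_tmul : c • (1 : C) ⊗ₜ[R] h = c ⊗ₜ[R] h := by
    rw [TensorProduct.smul_tmul', smul_eq_mul, mul_one]
  calc twistedTermD R Δ τ (c ⊗ₜ[R] h)
      = (c • e) * (1 ⊗ₜ[R] h) - (1 ⊗ₜ[R] h) * (c • e) := by
        rw [twistedTermD_tmul, hΔ c, map_smul]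
    _ = e * (c • 1 ⊗ₜ[R] h) - (c • 1 ⊗ₜ[R] h) * e := by
        simp only [smul_mul_assoc, mul_smul_comm]
    _ = (LinearMap.mulLeft R e - LinearMap.mulRight R e) (c ⊗ₜ[R] h) := by
        rw [smul_one_tmul, LinearMap.sub_apply, LinearMap.mulLeft_apply, LinearMap.mulRight_apply]

theorem twistedTermD_derivation_general (Δ : C →ₗ[R] C ⊗[R] C)
    (hleft : ∀ a c : C,
      Δ (a * c) = TensorProduct.map (LinearMap.mulLeft R a) (LinearMap.id : C →ₗ[R] C) (Δ c))
    (τ : C →ₗ[R] H) (x y : C ⊗[R] H) :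
    twistedTermD R Δ τ (x * y) = twistedTermD R Δ τ x * y + x * twistedTermD R Δ τ y := by
  have hΔ (c : C) : Δ c = c • Δ 1 :=
    calc Δ c = Δ (c * 1) := by rw [mul_one]
      -- `map (mulLeft R c) id` is definitionally the action of `c` on the left tensor factor.
      _ = c • Δ 1 := hleft c 1
  simp only [twistedTermD_eq_mulLeft_sub_mulRight Δ hΔ, LinearMap.sub_apply,
    LinearMap.mulLeft_apply, LinearMap.mulRight_apply]
  noncomm_ring

end TwistedTerm

/-- If `Δ : C → C ⊗ C` is a map of `C`-bimodules over a commutative algebra `C`, then for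
any linear `τ : C → H` the twisted term `D(c ⊗ h) = Σᵢ c₍₁ᵢ₎ ⊗ (τ(c₍₂ᵢ₎)·h − h·τ(c₍₂ᵢ₎))`
is a derivation of the tensor product algebra `C ⊗[R] H`. -/
theorem twistedTermD_derivation {R C H : Type*} [CommRing R] [CommRing C] [Algebra R C]
    [Ring H] [Algebra R H]
    (Δ : C →ₗ[R] C ⊗[R] C)
    (hleft : ∀ a c : C,
      Δ (a * c) = TensorProduct.map (LinearMap.mulLeft R a) (LinearMap.id : C →ₗ[R] C) (Δ c))
    (hright : ∀ a c : C,
      Δ (a * c) = TensorProduct.map (LinearMap.id : C →ₗ[R] C) (LinearMap.mulLeft R c) (Δ a))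
    (τ : C →ₗ[R] H) :
    ∀ x y : C ⊗[R] H,
      twistedTermD R Δ τ (x * y)
        = twistedTermD R Δ τ x * y + x * twistedTermD R Δ τ y :=
  twistedTermD_derivation_general Δ hleft τ
end

section
/- Let R be a commutative ring, C a coassociative counital cocommutative coalgebra over R with comultiplication Δ_C, and H an R-bialgebra with comultiplication Δ_H and multiplication μ_H. Let τ : C → H be an R-linear map whose image consists of primitive elements of H. Equip C ⊗[R] H with the tensor product coalgebra structure, with comultiplication Δ = (id_C ⊗ swap ⊗ id_H) ∘ (Δ_C ⊗ Δ_H). Define the R-linear 'twisted term' T : C ⊗ H → C ⊗ H as the composite T = (id_C ⊗ μ_H) ∘ (id_C ⊗ τ ⊗ id_H) ∘ (Δ_C ⊗ id_H), so T(c ⊗ h) = Σᵢ c₍₁ᵢ₎ ⊗ τ(c₍₂ᵢ₎)·h where Δ_C(c) = Σᵢ c₍₁ᵢ₎ ⊗ c₍₂ᵢ₎. Then T is a coderivation of the tensor coalgebra structure: Δ ∘ T = (T ⊗ id + id ⊗ T) ∘ Δ. -/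
/-!
If `f : C → End M` is linear with every `f c` a coderivation of `M`, then
`c ⊗ m ↦ Σ c₍₁₎ ⊗ f(c₍₂₎) m` is a coderivation of `C ⊗ M` for cocommutative `C`; the theorem is the
case `M = H`, `f c = τ(c) · _`, since left multiplication by a primitive element is a coderivation.
Factoring `Δ_{C ⊗ M}` as `id ⊗ Δ_M` followed by a map `C ⊗ (M ⊗ M) → (C ⊗ M) ⊗ (C ⊗ M)` that
duplicates only the `C`-factor, the hypothesis on `f` deals with the first map. For the second one,
coassociativity of `C` suffices when `f` acts on the right copy of `M`, and cocommutativity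
exchanges the two copies.
-/

open TensorProduct

/-- The tensor product coalgebra comultiplication on `C ⊗[R] H`:
`Δ = (id ⊗ swap ⊗ id) ∘ (Δ_C ⊗ Δ_H)`. -/
noncomputable def tensorComul (R C H : Type*) [CommRing R]
    [AddCommGroup C] [Module R C] [Coalgebra R C]
    [Ring H] [Bialgebra R H] :
    C ⊗[R] H →ₗ[R] (C ⊗[R] H) ⊗[R] (C ⊗[R] H) :=
  (TensorProduct.tensorTensorTensorComm R C C H H).toLinearMap
    ∘ₗ TensorProduct.map (Coalgebra.comul (R := R)) (Coalgebra.comul (R := R))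

/-- The twisted term `T = (id_C ⊗ μ_H) ∘ (id_C ⊗ τ ⊗ id_H) ∘ (Δ_C ⊗ id_H)`, so that
`T (c ⊗ h) = Σᵢ c₍₁ᵢ₎ ⊗ τ(c₍₂ᵢ₎)·h`. -/
noncomputable def twistedTermT (R C H : Type*) [CommRing R]
    [AddCommGroup C] [Module R C] [Coalgebra R C]
    [Ring H] [Bialgebra R H] (τ : C →ₗ[R] H) :
    C ⊗[R] H →ₗ[R] C ⊗[R] H :=
  TensorProduct.map (LinearMap.id : C →ₗ[R] C) (LinearMap.mul' R H)
    ∘ₗ (TensorProduct.assoc R C H H).toLinearMap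
    ∘ₗ TensorProduct.map (TensorProduct.map (LinearMap.id : C →ₗ[R] C) τ)
        (LinearMap.id : H →ₗ[R] H)
    ∘ₗ TensorProduct.map (Coalgebra.comul (R := R)) (LinearMap.id : H →ₗ[R] H)

open Coalgebra LinearMap

/-- A linear endomorphism `D` of a coalgebra `A` is a coderivation if
`Δ ∘ D = (D ⊗ id + id ⊗ D) ∘ Δ`. -/
def IsCoderivation {R A : Type*} [CommSemiring R] [AddCommMonoid A] [Module R A]
    [CoalgebraStruct R A] (D : A →ₗ[R] A) : Prop :=
  comul ∘ₗ D = D.rTensor A ∘ₗ comul + D.lTensor A ∘ₗ comul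

theorem isCoderivation_mulLeft_of_primitive {R H : Type*} [CommSemiring R] [Semiring H]
    [Bialgebra R H] {a : H} (ha : comul (R := R) a = a ⊗ₜ[R] 1 + 1 ⊗ₜ[R] a) :
    IsCoderivation (mulLeft R a) := by
  have primitive_mul (z : H ⊗[R] H) : (a ⊗ₜ[R] 1 + 1 ⊗ₜ[R] a) * z
      = (mulLeft R a).rTensor H z + (mulLeft R a).lTensor H z := by
    induction z with
    | zero => simp
    | add x y hx hy => rw [mul_add, hx, hy, map_add, map_add, add_add_add_comm]
    | tmul x y => simp [add_mul]
  ext h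
  simp [ha, primitive_mul]

theorem comm_comp_tensorTensorTensorComm (R A B M N : Type*) [CommSemiring R]
    [AddCommMonoid A] [Module R A] [AddCommMonoid B] [Module R B]
    [AddCommMonoid M] [Module R M] [AddCommMonoid N] [Module R N] :
    (TensorProduct.comm R (A ⊗[R] M) (B ⊗[R] N)).toLinearMap
        ∘ₗ (tensorTensorTensorComm R A B M N).toLinearMap
      = (tensorTensorTensorComm R B A N M).toLinearMap
        ∘ₗ TensorProduct.map (TensorProduct.comm R A B).toLinearMap
          (TensorProduct.comm R M N).toLinearMap := by
  ext
  simp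

section CofreeExtension

variable {R C M N P : Type*} [CommSemiring R] [AddCommMonoid C] [Module R C]
  [AddCommMonoid M] [Module R M] [AddCommMonoid N] [Module R N] [AddCommMonoid P] [Module R P]

section CoalgebraStruct

variable [CoalgebraStruct R C]

/-- The map `c ⊗ m ↦ Σ c₍₁₎ ⊗ f(c₍₂₎) m`. For a coalgebra `C` it is the morphism from the left
`C`-comodule `C ⊗ M` to the cofree left `C`-comodule `C ⊗ N` corresponding to `c ⊗ m ↦ f(c) m`. -/
noncomputable def cofreeExtension (f : C →ₗ[R] M →ₗ[R] N) : C ⊗[R] M →ₗ[R] C ⊗[R] N :=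
  (lift f).lTensor C ∘ₗ (TensorProduct.assoc R C C M).toLinearMap ∘ₗ comul.rTensor M

theorem cofreeExtension_tmul (f : C →ₗ[R] M →ₗ[R] N) (c : C) (m : M) :
    cofreeExtension f (c ⊗ₜ m) = (f.flip m).lTensor C (comul c) := by
  simp only [cofreeExtension, comp_apply, rTensor_tmul]
  induction comul (R := R) c with
  | zero => simp
  | add x y hx hy => simp only [add_tmul, map_add, hx, hy]
  | tmul a b => simp

theorem cofreeExtension_add (f g : C →ₗ[R] M →ₗ[R] N) :
    cofreeExtension (f + g) = cofreeExtension f + cofreeExtension g := by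
  ext c m
  have flip_add : (f + g).flip m = f.flip m + g.flip m := rfl
  simp [cofreeExtension_tmul, flip_add, lTensor_add]

theorem lTensor_comp_cofreeExtension (g : N →ₗ[R] P) (f : C →ₗ[R] M →ₗ[R] N) :
    g.lTensor C ∘ₗ cofreeExtension f = cofreeExtension (f.compr₂ g) := by
  ext c m
  have flip_compr₂ : (f.compr₂ g).flip m = g ∘ₗ f.flip m := rfl
  simp [cofreeExtension_tmul, flip_compr₂, lTensor_comp_apply]

theorem cofreeExtension_comp_lTensor (f : C →ₗ[R] N →ₗ[R] P) (g : M →ₗ[R] N) :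
    cofreeExtension f ∘ₗ g.lTensor C = cofreeExtension (f.compl₂ g) := by
  ext c m
  have flip_compl₂ : (f.compl₂ g).flip m = f.flip (g m) := rfl
  simp [cofreeExtension_tmul, flip_compl₂]

variable (R C M N) in
/-- The map `c ⊗ (m ⊗ n) ↦ Σ (c₍₁₎ ⊗ m) ⊗ (c₍₂₎ ⊗ n)`, which makes the functor `C ⊗ -` oplax
monoidal when `C` is a coalgebra. -/
noncomputable def comulDistrib : C ⊗[R] (M ⊗[R] N) →ₗ[R] (C ⊗[R] M) ⊗[R] (C ⊗[R] N) :=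
  (tensorTensorTensorComm R C C M N).toLinearMap ∘ₗ comul.rTensor (M ⊗[R] N)

theorem comul_eq_comulDistrib_comp_lTensor [CoalgebraStruct R M] :
    (comul : C ⊗[R] M →ₗ[R] _) = comulDistrib R C M M ∘ₗ comul.lTensor C :=
  TensorProduct.ext' fun _ _ ↦ rfl

end CoalgebraStruct

variable [Coalgebra R C]

theorem comm_comp_comulDistrib [IsCocomm R C] :
    (TensorProduct.comm R (C ⊗[R] M) (C ⊗[R] N)).toLinearMap ∘ₗ comulDistrib R C M N
      = comulDistrib R C N M ∘ₗ (TensorProduct.comm R M N).toLinearMap.lTensor C := by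
  ext c m n
  simpa [comulDistrib] using LinearMap.congr_fun
    (comm_comp_tensorTensorTensorComm R C C M N) (comul c ⊗ₜ (m ⊗ₜ n))

theorem comulDistrib_comp_cofreeExtension_lTensorHom (f : C →ₗ[R] N →ₗ[R] P) :
    comulDistrib R C M P ∘ₗ cofreeExtension (lTensorHom M ∘ₗ f)
      = (cofreeExtension f).lTensor (C ⊗[R] M) ∘ₗ comulDistrib R C M N := by
  ext c m n
  let insertPair : C ⊗[R] (C ⊗[R] C) →ₗ[R] (C ⊗[R] M) ⊗[R] (C ⊗[R] P) :=
    TensorProduct.map ((TensorProduct.mk R C M).flip m) ((f.flip n).lTensor C)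
  have distrib_extension (z : C ⊗[R] C) :
      comulDistrib R C M P (((lTensorHom M ∘ₗ f).flip (m ⊗ₜ n)).lTensor C z)
        = insertPair (TensorProduct.assoc R C C C (comul.rTensor C z)) := by
    induction z with
    | zero => simp
    | add x y hx hy => simp only [map_add, hx, hy]
    | tmul a b =>
      simp only [comulDistrib, comp_apply, lTensor_tmul, rTensor_tmul, LinearEquiv.coe_coe]
      induction comul (R := R) a with
      | zero => simp
      | add x y hx hy => simp_all [add_tmul]
      | tmul a₁ a₂ => simp [insertPair]
  have extension_distrib (z : C ⊗[R] C) :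
      (cofreeExtension f).lTensor (C ⊗[R] M) (tensorTensorTensorComm R C C M N (z ⊗ₜ (m ⊗ₜ n)))
        = insertPair (comul.lTensor C z) := by
    induction z with
    | zero => simp
    | add x y hx hy => simp only [add_tmul, map_add, hx, hy]
    | tmul a b => simp [insertPair, cofreeExtension_tmul]
  calc comulDistrib R C M P (cofreeExtension (lTensorHom M ∘ₗ f) (c ⊗ₜ (m ⊗ₜ n)))
      = insertPair (TensorProduct.assoc R C C C (comul.rTensor C (comul c))) := by
        rw [cofreeExtension_tmul, distrib_extension]
    _ = insertPair (comul.lTensor C (comul c)) := by rw [coassoc_apply]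
    _ = (cofreeExtension f).lTensor (C ⊗[R] M) (comulDistrib R C M N (c ⊗ₜ (m ⊗ₜ n))) :=
        (extension_distrib _).symm

theorem comulDistrib_comp_cofreeExtension_rTensorHom [IsCocomm R C] (f : C →ₗ[R] M →ₗ[R] P) :
    comulDistrib R C P N ∘ₗ cofreeExtension (rTensorHom N ∘ₗ f)
      = (cofreeExtension f).rTensor (C ⊗[R] N) ∘ₗ comulDistrib R C M N := by
  have conj_eq : rTensorHom N ∘ₗ f = ((lTensorHom N ∘ₗ f).compr₂
      (TensorProduct.comm R N P).toLinearMap).compl₂ (TensorProduct.comm R M N).toLinearMap := by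
    ext c m n
    simp
  calc comulDistrib R C P N ∘ₗ cofreeExtension (rTensorHom N ∘ₗ f)
      = comulDistrib R C P N ∘ₗ (TensorProduct.comm R N P).toLinearMap.lTensor C
          ∘ₗ cofreeExtension (lTensorHom N ∘ₗ f)
          ∘ₗ (TensorProduct.comm R M N).toLinearMap.lTensor C := by
        rw [conj_eq, ← cofreeExtension_comp_lTensor, ← lTensor_comp_cofreeExtension, comp_assoc]
    _ = (TensorProduct.comm R (C ⊗[R] N) (C ⊗[R] P)).toLinearMap
          ∘ₗ (comulDistrib R C N P ∘ₗ cofreeExtension (lTensorHom N ∘ₗ f))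
          ∘ₗ (TensorProduct.comm R M N).toLinearMap.lTensor C := by
        simp only [← comp_assoc, comm_comp_comulDistrib]
    _ = (TensorProduct.comm R (C ⊗[R] N) (C ⊗[R] P)).toLinearMap
          ∘ₗ (cofreeExtension f).lTensor (C ⊗[R] N)
          ∘ₗ (TensorProduct.comm R (C ⊗[R] M) (C ⊗[R] N)).toLinearMap ∘ₗ comulDistrib R C M N := by
        rw [comulDistrib_comp_cofreeExtension_lTensorHom, comm_comp_comulDistrib, comp_assoc]
    _ = (cofreeExtension f).rTensor (C ⊗[R] N) ∘ₗ comulDistrib R C M N := by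
        rw [← comm_comp_lTensor_comp_comm_eq, comp_assoc, comp_assoc]

theorem isCoderivation_cofreeExtension [IsCocomm R C] [CoalgebraStruct R M]
    {f : C →ₗ[R] Module.End R M} (hf : ∀ c, IsCoderivation (f c)) :
    IsCoderivation (cofreeExtension f) := by
  have comul_compr : f.compr₂ comul
      = (rTensorHom M ∘ₗ f).compl₂ comul + (lTensorHom M ∘ₗ f).compl₂ comul :=
    LinearMap.ext hf
  calc comul ∘ₗ cofreeExtension f
      = comulDistrib R C M M ∘ₗ cofreeExtension (f.compr₂ comul) := by
        rw [comul_eq_comulDistrib_comp_lTensor, comp_assoc, lTensor_comp_cofreeExtension]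
    _ = comulDistrib R C M M ∘ₗ cofreeExtension (rTensorHom M ∘ₗ f) ∘ₗ comul.lTensor C
        + comulDistrib R C M M ∘ₗ cofreeExtension (lTensorHom M ∘ₗ f) ∘ₗ comul.lTensor C := by
        rw [comul_compr, cofreeExtension_add, comp_add, cofreeExtension_comp_lTensor,
          cofreeExtension_comp_lTensor]
    _ = (cofreeExtension f).rTensor _ ∘ₗ comul + (cofreeExtension f).lTensor _ ∘ₗ comul := by
        simp only [← comp_assoc, comulDistrib_comp_cofreeExtension_rTensorHom,
          comulDistrib_comp_cofreeExtension_lTensorHom, comul_eq_comulDistrib_comp_lTensor]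

end CofreeExtension

section TwistedTerm

variable {R C H : Type*} [CommRing R] [AddCommGroup C] [Module R C] [Coalgebra R C]
  [Ring H] [Bialgebra R H]

variable (R C H) in
theorem tensorComul_eq_comul : tensorComul R C H = comul :=
  rfl

theorem twistedTermT_eq_cofreeExtension (τ : C →ₗ[R] H) :
    twistedTermT R C H τ = cofreeExtension (LinearMap.mul R H ∘ₗ τ) := by
  ext c h
  simp only [twistedTermT, AlgebraTensorModule.curry_apply, curry_apply, restrictScalars_self,
    comp_apply, map_tmul, cofreeExtension_tmul]
  induction comul (R := R) c with
  | zero => simp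
  | add x y hx hy => simp only [add_tmul, map_add, hx, hy]
  | tmul a b => simp

end TwistedTerm

/-- If `C` is a cocommutative coalgebra, `H` a bialgebra, and `τ : C → H` a linear map
whose image consists of primitive elements, then the twisted term
`T (c ⊗ h) = Σᵢ c₍₁ᵢ₎ ⊗ τ(c₍₂ᵢ₎)·h` is a coderivation of the tensor product coalgebra
structure on `C ⊗[R] H`: `Δ ∘ T = (T ⊗ id + id ⊗ T) ∘ Δ`. -/
theorem twistedTermT_coderivation {R C H : Type*} [CommRing R]
    [AddCommGroup C] [Module R C] [Coalgebra R C]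
    (hcocomm : (TensorProduct.comm R C C).toLinearMap ∘ₗ (Coalgebra.comul (R := R))
      = (Coalgebra.comul : C →ₗ[R] C ⊗[R] C))
    [Ring H] [Bialgebra R H]
    (τ : C →ₗ[R] H)
    (hτ : ∀ c : C, Coalgebra.comul (R := R) (τ c) = τ c ⊗ₜ[R] 1 + 1 ⊗ₜ[R] τ c) :
    tensorComul R C H ∘ₗ twistedTermT R C H τ
      = TensorProduct.map (twistedTermT R C H τ) (LinearMap.id : C ⊗[R] H →ₗ[R] C ⊗[R] H)
          ∘ₗ tensorComul R C H
        + TensorProduct.map (LinearMap.id : C ⊗[R] H →ₗ[R] C ⊗[R] H) (twistedTermT R C H τ)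
          ∘ₗ tensorComul R C H := by
  have : IsCocomm R C := ⟨hcocomm⟩
  rw [tensorComul_eq_comul, twistedTermT_eq_cofreeExtension]
  exact isCoderivation_cofreeExtension fun c ↦ isCoderivation_mulLeft_of_primitive (hτ c)
end

section
/- Let R be a commutative ℚ-algebra, C a coassociative counital cocommutative coalgebra over R with comultiplication Δ, and L a Lie algebra over R. On the R-module Hom_R(C, L) of R-linear maps, define the convolution bracket ⁅f, g⁆ as the composite (Lie bracket of L) ∘ (f ⊗ g) ∘ Δ, so ⁅f, g⁆(c) = Σᵢ ⁅f(c₍₁ᵢ₎), g(c₍₂ᵢ₎)⁆ where Δ(c) = Σᵢ c₍₁ᵢ₎ ⊗ c₍₂ᵢ₎. Then this bracket makes Hom_R(C, L) a Lie algebra over R: it is R-bilinear, satisfies ⁅f, f⁆ = 0 for all f, and satisfies the Leibniz/Jacobi identity ⁅f, ⁅g, h⁆⁆ = ⁅⁅f, g⁆, h⁆ + ⁅g, ⁅f, h⁆⁆ for all f, g, h. -/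
open TensorProduct

/-- The convolution bracket `⁅f, g⁆ = [·,·] ∘ (f ⊗ g) ∘ Δ` on `Hom_R(C, L)`, so that
`⁅f, g⁆ (c) = Σᵢ ⁅f c₍₁ᵢ₎, g c₍₂ᵢ₎⁆`. -/
noncomputable def convBracket (R C L : Type*) [CommRing R] [Algebra ℚ R]
    [AddCommGroup C] [Module R C] [Coalgebra R C]
    [LieRing L] [LieAlgebra R L] (f g : C →ₗ[R] L) : C →ₗ[R] L :=
  TensorProduct.lift
    (LinearMap.mk₂ R (fun x y : L => ⁅x, y⁆)
      (fun m₁ m₂ n => add_lie m₁ m₂ n)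
      (fun r m n => smul_lie r m n)
      (fun m n₁ n₂ => lie_add m n₁ n₂)
      (fun r m n => lie_smul r m n))
    ∘ₗ TensorProduct.map f g ∘ₗ (Coalgebra.comul (R := R))

/-!
For an `L`-module `M` with action `ρ : L → End M`, each `f : C → L` acts on `Hom(C, M)` through
its image `F = ρ ∘ f` in the convolution algebra `Hom(C, End M)`: `⁅f, h⁆ = F · h`, and
coassociativity gives `F · (G · h) = (F * G) · h`. Cocommutativity identifies the image of `⁅f, g⁆`
with the commutator `F * G - G * F`, and the Leibniz identity is the resulting decomposition of
`(F * G) · h`.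

Cocommutativity also gives `⁅f, f⁆ = -⁅f, f⁆`, which vanishes once `2` is regular on `L`.
-/

section Convolution

open Coalgebra

variable {R C M N P Q X Y : Type*} [CommSemiring R] [AddCommMonoid C] [Module R C]
  [AddCommMonoid M] [Module R M] [AddCommMonoid N] [Module R N] [AddCommMonoid P] [Module R P]
  [AddCommMonoid Q] [Module R Q] [AddCommMonoid X] [Module R X] [AddCommMonoid Y] [Module R Y]

/-- The convolution along a bilinear map `β`, `c ↦ Σᵢ β (f c₍₁ᵢ₎) (g c₍₂ᵢ₎)`, as a bilinear map in
`f` and `g`. It covers at once the convolution bracket, the convolution product of `Hom(C, End M)`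
and the action of the latter on `Hom(C, M)`. -/
noncomputable def convBilin [CoalgebraStruct R C] (β : M →ₗ[R] N →ₗ[R] P) :
    (C →ₗ[R] M) →ₗ[R] (C →ₗ[R] N) →ₗ[R] C →ₗ[R] P :=
  (mapBilinear (RingHom.id R) C C M N).compr₂
    (LinearMap.lcomp R P comul ∘ₗ LinearMap.llcomp R _ _ _ (lift β))

lemma convBilin_eq_comp [CoalgebraStruct R C] (β : M →ₗ[R] N →ₗ[R] P)
    (f : C →ₗ[R] M) (g : C →ₗ[R] N) :
    convBilin β f g = lift β ∘ₗ map f g ∘ₗ comul :=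
  rfl

lemma convBilin_comp_left [CoalgebraStruct R C] (β : M →ₗ[R] N →ₗ[R] P) (φ : X →ₗ[R] M)
    (f : C →ₗ[R] X) (g : C →ₗ[R] N) :
    convBilin β (φ ∘ₗ f) g = convBilin (β ∘ₗ φ) f g := by
  have on_tensors : lift β ∘ₗ map (φ ∘ₗ f) g = lift (β ∘ₗ φ) ∘ₗ map f g :=
    TensorProduct.ext' fun _ _ => rfl
  simp only [convBilin_eq_comp, ← LinearMap.comp_assoc, on_tensors]

lemma convBilin_flip [Coalgebra R C] [IsCocomm R C] (β : M →ₗ[R] N →ₗ[R] P)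
    (f : C →ₗ[R] M) (g : C →ₗ[R] N) :
    convBilin β.flip g f = convBilin β f g := by
  have on_tensors : lift β.flip ∘ₗ map g f ∘ₗ (TensorProduct.comm R C C).toLinearMap
      = lift β ∘ₗ map f g :=
    TensorProduct.ext' fun _ _ => rfl
  calc convBilin β.flip g f
      = (lift β.flip ∘ₗ map g f ∘ₗ (TensorProduct.comm R C C).toLinearMap) ∘ₗ comul := by
        rw [convBilin_eq_comp, LinearMap.comp_assoc, LinearMap.comp_assoc, comm_comp_comul]
    _ = convBilin β f g := by
        rw [on_tensors, LinearMap.comp_assoc, convBilin_eq_comp]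

lemma convBilin_assoc [Coalgebra R C] {β : M →ₗ[R] X →ₗ[R] Q} {γ : N →ₗ[R] P →ₗ[R] X}
    {β' : Y →ₗ[R] P →ₗ[R] Q} {γ' : M →ₗ[R] N →ₗ[R] Y}
    (hassoc : ∀ m n p, β m (γ n p) = β' (γ' m n) p)
    (f : C →ₗ[R] M) (g : C →ₗ[R] N) (h : C →ₗ[R] P) :
    convBilin β f (convBilin γ g h) = convBilin β' (convBilin γ' f g) h := by
  have on_tensors : lift β ∘ₗ map f (lift γ ∘ₗ map g h) ∘ₗ (TensorProduct.assoc R C C C).toLinearMap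
      = lift β' ∘ₗ map (lift γ' ∘ₗ map f g) h :=
    TensorProduct.ext_threefold fun x y z => hassoc (f x) (g y) (h z)
  calc convBilin β f (convBilin γ g h)
      = lift β ∘ₗ map f (lift γ ∘ₗ map g h) ∘ₗ comul.lTensor C ∘ₗ comul := by
        rw [← LinearMap.comp_assoc comul, LinearMap.map_comp_lTensor, LinearMap.comp_assoc,
          convBilin_eq_comp, convBilin_eq_comp]
    _ = (lift β ∘ₗ map f (lift γ ∘ₗ map g h) ∘ₗ (TensorProduct.assoc R C C C).toLinearMap) ∘ₗ
          comul.rTensor C ∘ₗ comul := by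
        simp only [← coassoc, LinearMap.comp_assoc]
    _ = lift β' ∘ₗ map (lift γ' ∘ₗ map f g) h ∘ₗ comul.rTensor C ∘ₗ comul := by
        rw [on_tensors, LinearMap.comp_assoc]
    _ = convBilin β' (convBilin γ' f g) h := by
        rw [← LinearMap.comp_assoc comul, LinearMap.map_comp_rTensor, LinearMap.comp_assoc,
          convBilin_eq_comp, convBilin_eq_comp]

end Convolution

section Alternating

variable {R C M P : Type*} [CommSemiring R] [AddCommMonoid C] [Module R C] [Coalgebra R C]
  [Coalgebra.IsCocomm R C] [AddCommMonoid M] [Module R M] [AddCommGroup P] [Module R P]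

lemma convBilin_isAlt {β : M →ₗ[R] M →ₗ[R] P} (hβ : β.IsAlt) (h2 : IsSMulRegular P (2 : R)) :
    (convBilin (C := C) β).IsAlt := by
  intro f
  have flip_eq_neg : lift β.flip = -lift β :=
    TensorProduct.ext' fun x y => (hβ.neg x y).symm
  have eq_neg_self : convBilin β f f = -convBilin β f f := by
    calc convBilin β f f = convBilin β.flip f f := (convBilin_flip β f f).symm
      _ = -convBilin β f f := by
        rw [convBilin_eq_comp, flip_eq_neg, LinearMap.neg_comp, convBilin_eq_comp]
  ext c
  refine h2.right_eq_zero_of_smul ?_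
  rw [two_smul, ← eq_neg_iff_add_eq_zero]
  exact LinearMap.congr_fun eq_neg_self c

end Alternating

section Lie

variable (R C L M : Type*) [CommRing R] [AddCommMonoid C] [Module R C]
  [LieRing L] [LieAlgebra R L] [AddCommGroup M] [Module R M] [LieRingModule L M] [LieModule R L M]

/-- The convolution of the action of a Lie algebra `L` on a Lie module `M`. For `M = L` it is the
convolution bracket, over an arbitrary commutative ring and bundled as a bilinear map. -/
noncomputable def convLie [CoalgebraStruct R C] :
    (C →ₗ[R] L) →ₗ[R] (C →ₗ[R] M) →ₗ[R] C →ₗ[R] M :=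
  convBilin (LieModule.toEnd R L M : L →ₗ[R] Module.End R M)

variable {R C L}

/-- The image `ρ ∘ f` of `f : C → L` in the convolution algebra `Hom(C, End M)`, where
`ρ : L → End M` is the action; `f` acts on `Hom(C, M)` through it. -/
noncomputable def convToEnd (f : C →ₗ[R] L) : C →ₗ[R] Module.End R M :=
  (LieModule.toEnd R L M : L →ₗ[R] Module.End R M) ∘ₗ f

lemma convLie_eq_convBilin_id [CoalgebraStruct R C] (f : C →ₗ[R] L) (h : C →ₗ[R] M) :
    convLie R C L M f h = convBilin LinearMap.id (convToEnd M f) h := by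
  rw [convToEnd, convBilin_comp_left, LinearMap.id_comp, convLie]

variable [Coalgebra R C] [Coalgebra.IsCocomm R C]

lemma convToEnd_convLie (f g : C →ₗ[R] L) :
    convToEnd M (convLie R C L L f g)
      = convBilin (LinearMap.mul R (Module.End R M)) (convToEnd M f) (convToEnd M g)
        - convBilin (LinearMap.mul R (Module.End R M)) (convToEnd M g) (convToEnd M f) := by
  have on_tensors : (LieModule.toEnd R L M : L →ₗ[R] Module.End R M) ∘ₗ
        lift (LieModule.toEnd R L L : L →ₗ[R] Module.End R L) ∘ₗ map f g
      = lift (LinearMap.mul R (Module.End R M)) ∘ₗ map (convToEnd M f) (convToEnd M g)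
        - lift (LinearMap.mul R (Module.End R M)).flip ∘ₗ map (convToEnd M f) (convToEnd M g) :=
    TensorProduct.ext' fun x y => LinearMap.ext fun m => lie_lie (f x) (g y) m
  rw [← convBilin_flip _ (convToEnd M g), convBilin_eq_comp, convBilin_eq_comp,
    ← LinearMap.comp_assoc, ← LinearMap.comp_assoc, ← LinearMap.sub_comp, ← on_tensors]
  simp only [convToEnd, convLie, convBilin_eq_comp, LinearMap.comp_assoc]

lemma convLie_leibniz (f g : C →ₗ[R] L) (h : C →ₗ[R] M) :
    convLie R C L M f (convLie R C L M g h)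
      = convLie R C L M (convLie R C L L f g) h + convLie R C L M g (convLie R C L M f h) := by
  have action_assoc (F G : C →ₗ[R] Module.End R M) :
      convBilin LinearMap.id F (convBilin LinearMap.id G h)
        = convBilin LinearMap.id (convBilin (LinearMap.mul R (Module.End R M)) F G) h :=
    convBilin_assoc (fun _ _ _ => rfl) F G h
  simp only [convLie_eq_convBilin_id M, action_assoc, convToEnd_convLie, map_sub,
    LinearMap.sub_apply, sub_add_cancel]

theorem convBracket_lieAlgebra_general (h2 : IsSMulRegular L (2 : R)) :
    (convLie R C L L).IsAlt ∧ ∀ f g h : C →ₗ[R] L,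
      convLie R C L L f (convLie R C L L g h)
        = convLie R C L L (convLie R C L L f g) h + convLie R C L L g (convLie R C L L f h) :=
  ⟨convBilin_isAlt lie_self h2, convLie_leibniz L⟩

end Lie

lemma convBracket_eq_convLie {R C L : Type*} [CommRing R] [Algebra ℚ R]
    [AddCommGroup C] [Module R C] [Coalgebra R C] [LieRing L] [LieAlgebra R L]
    (f g : C →ₗ[R] L) :
    convBracket R C L f g = convLie R C L L f g :=
  rfl

lemma isUnit_two_of_algebra_rat (R : Type*) [CommRing R] [Algebra ℚ R] : IsUnit (2 : R) := by
  simpa only [map_ofNat] using (IsUnit.mk0 (2 : ℚ) two_ne_zero).map (algebraMap ℚ R)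

/-- For a cocommutative coalgebra `C` over a commutative `ℚ`-algebra `R` and a Lie
algebra `L` over `R`, the convolution bracket makes `Hom_R(C, L)` a Lie algebra over `R`:
it is `R`-bilinear, alternating, and satisfies the Leibniz/Jacobi identity. -/
theorem convBracket_lieAlgebra {R C L : Type*} [CommRing R] [Algebra ℚ R]
    [AddCommGroup C] [Module R C] [Coalgebra R C]
    (hcocomm : (TensorProduct.comm R C C).toLinearMap ∘ₗ (Coalgebra.comul (R := R))
      = (Coalgebra.comul : C →ₗ[R] C ⊗[R] C))
    [LieRing L] [LieAlgebra R L] :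
    (∀ f₁ f₂ g : C →ₗ[R] L,
        convBracket R C L (f₁ + f₂) g = convBracket R C L f₁ g + convBracket R C L f₂ g)
    ∧ (∀ (r : R) (f g : C →ₗ[R] L),
        convBracket R C L (r • f) g = r • convBracket R C L f g)
    ∧ (∀ f g₁ g₂ : C →ₗ[R] L,
        convBracket R C L f (g₁ + g₂) = convBracket R C L f g₁ + convBracket R C L f g₂)
    ∧ (∀ (r : R) (f g : C →ₗ[R] L),
        convBracket R C L f (r • g) = r • convBracket R C L f g)
    ∧ (∀ f : C →ₗ[R] L, convBracket R C L f f = 0)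
    ∧ (∀ f g h : C →ₗ[R] L,
        convBracket R C L f (convBracket R C L g h)
          = convBracket R C L (convBracket R C L f g) h
            + convBracket R C L g (convBracket R C L f h)) := by
  have : Coalgebra.IsCocomm R C := ⟨hcocomm⟩
  obtain ⟨alternating, leibniz⟩ := convBracket_lieAlgebra_general (C := C) (L := L)
    ((isUnit_two_of_algebra_rat R).isSMulRegular L)
  simp only [convBracket_eq_convLie]
  exact ⟨LinearMap.map_add₂ _, LinearMap.map_smul₂ _, fun f => map_add _, fun r f => map_smul _ r,
    alternating, leibniz⟩
end
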